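/- arXiv:math/0210137 — 2 statements merged into one kernel-verified Lean document; each statement's English description precedes it below -/
import Mathlib

section
/- For α ≥ 1/2 and x, y > 0, the measure dν^α_{x,y}(z) = m_α(x,y,z) z^{2α+1} dz on [|x−y|, x+y], where m_α(x,y,z) = (2^{1−2α}Γ(α+1)/(√π Γ(α+1/2))) · [(z² − (x−y)²)((x+y)² − z²)]^{α−1/2}/(xyz)^{2α}, is a probability measure and satisfies the Bessel product formula j_α(xt) j_α(yt) = ∫_0^∞ j_α(zt) dν^α_{x,y}(z) for all real t. -/
open MeasureTheory

/-- The normalized Bessel function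
`j_α(x) = Γ(α+1) Σ_{n≥0} (−1)^n (x/2)^{2n} / (n! Γ(n+α+1))`. -/
noncomputable def besselJR (α : ℝ) (x : ℝ) : ℝ :=
  Real.Gamma (α + 1) *
    ∑' n : ℕ, ((-1 : ℝ)) ^ n * (x / 2) ^ (2 * n) /
      ((n.factorial : ℝ) * Real.Gamma ((n : ℝ) + α + 1))

/-- Gegenbauer's kernel
`m_α(x,y,z) = (2^{1−2α}Γ(α+1)/(√π Γ(α+1/2))) [(z²−(x−y)²)((x+y)²−z²)]^{α−1/2}/(xyz)^{2α}`
for `z ∈ [|x−y|, x+y]`, and `0` otherwise. -/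
noncomputable def besselProdKernel (α x y : ℝ) (z : ℝ) : ℝ :=
  Set.indicator (Set.Icc |x - y| (x + y))
    (fun z => 2 ^ (1 - 2 * α) * Real.Gamma (α + 1) /
        (Real.sqrt Real.pi * Real.Gamma (α + 1/2)) *
        ((z ^ 2 - (x - y) ^ 2) * ((x + y) ^ 2 - z ^ 2)) ^ (α - 1/2) /
        (x * y * z) ^ (2 * α)) z

/-!
Up to a Gamma factor, `j_α(x)` is the Bessel–Clifford series `C_α(u) = ∑ uⁿ / (n! Γ(n + α + 1))` at
`u = -x² / 4`. Beta integrals give the moments of the Gegenbauer weight `(1 - s²)^(α - 1/2)`. When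
`c² = ab`, expanding `(a + b + 2cs)ⁿ` and integrating against this weight leaves a sum which the
Chu–Vandermonde identity turns into the `n`-th term of the Cauchy product of `C_α(a)` and `C_α(b)`;
hence `C_α(a) C_α(b)` is the average of `C_α(a + b + 2cs)`. The substitution
`s = (z² - x² - y²) / (2xy)`, which is the law of cosines, carries the weight to Gegenbauer's
kernel.
-/

section BesselClifford

open Real Finset
open scoped Nat

variable {ν : ℝ}

/-- The Taylor coefficients of the Bessel–Clifford function `C_ν`. -/
noncomputable def besselCliffordCoeff (ν : ℝ) (n : ℕ) : ℝ :=
  1 / (n ! * Gamma (n + ν + 1))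

/-- The Bessel–Clifford function `C_ν(u) = ∑ uⁿ / (n! Γ(n + ν + 1))`, in which the normalized Bessel
function is `j_ν(x) = Γ(ν + 1) C_ν(-x² / 4)`. -/
noncomputable def besselClifford (ν u : ℝ) : ℝ :=
  ∑' n, besselCliffordCoeff ν n * u ^ n

lemma besselJR_eq_besselClifford (ν x : ℝ) :
    besselJR ν x = Gamma (ν + 1) * besselClifford ν (-x ^ 2 / 4) := by
  unfold besselJR besselClifford besselCliffordCoeff
  congr 1
  refine tsum_congr fun n => ?_
  rw [show -x ^ 2 / 4 = -1 * (x / 2) ^ 2 by ring, mul_pow, ← pow_mul]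
  ring

lemma Gamma_natCast_add_add_one_pos (hν : -1 < ν) (n : ℕ) : 0 < Gamma (n + ν + 1) :=
  Gamma_pos_of_pos (by linarith [n.cast_nonneg (α := ℝ)])

lemma besselCliffordCoeff_pos (hν : -1 < ν) (n : ℕ) : 0 < besselCliffordCoeff ν n :=
  one_div_pos.2 (mul_pos (by positivity) (Gamma_natCast_add_add_one_pos hν n))

lemma besselCliffordCoeff_succ (hν : -1 < ν) (n : ℕ) :
    besselCliffordCoeff ν (n + 1) = besselCliffordCoeff ν n / ((n + 1) * (n + ν + 1)) := by
  have hn : (n : ℝ) + ν + 1 ≠ 0 := by linarith [n.cast_nonneg (α := ℝ)]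
  have hGamma : Gamma ((n + 1 : ℕ) + ν + 1) = (n + ν + 1) * Gamma (n + ν + 1) := by
    rw [← Gamma_add_one hn]
    push_cast
    ring_nf
  rw [besselCliffordCoeff, besselCliffordCoeff, hGamma, Nat.factorial_succ]
  push_cast
  field_simp

lemma summable_besselCliffordCoeff_mul_pow (hν : -1 < ν) (u : ℝ) :
    Summable fun n => besselCliffordCoeff ν n * u ^ n := by
  refine summable_of_ratio_norm_eventually_le (r := 1 / 2) (by norm_num) ?_
  filter_upwards [Filter.eventually_ge_atTop (max 1 ⌈2 * |u|⌉₊)] with n hn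
  have hone : (1 : ℝ) ≤ n := by exact_mod_cast (le_max_left _ _).trans hn
  have hu : 2 * |u| ≤ n := (Nat.le_ceil _).trans (by exact_mod_cast (le_max_right _ _).trans hn)
  have hratio : |u| / ((n + 1) * (n + ν + 1)) ≤ 1 / 2 := by
    rw [div_le_div_iff₀ (by nlinarith) two_pos]
    nlinarith
  have hpos : 0 < ((n : ℝ) + 1) * (n + ν + 1) := by nlinarith
  calc ‖besselCliffordCoeff ν (n + 1) * u ^ (n + 1)‖
      = |u| / ((n + 1) * (n + ν + 1)) * ‖besselCliffordCoeff ν n * u ^ n‖ := by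
        rw [besselCliffordCoeff_succ hν, pow_succ, ← mul_assoc, norm_mul, div_mul_eq_mul_div,
          norm_div, Real.norm_of_nonneg hpos.le, Real.norm_eq_abs u]
        ring
    _ ≤ 1 / 2 * ‖besselCliffordCoeff ν n * u ^ n‖ := by gcongr

lemma Gamma_add_natCast {r : ℝ} (hr : ∀ m : ℕ, r ≠ -m) (n : ℕ) :
    Gamma (r + n) = (ascPochhammer ℝ n).eval r * Gamma r := by
  induction n with
  | zero => simp
  | succ n ih =>
    rw [Nat.cast_succ, ← add_assoc, Gamma_add_one (mt eq_neg_of_add_eq_zero_left (hr n)), ih,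
      ascPochhammer_succ_eval]
    ring

lemma multichoose_eq_Gamma_div {r : ℝ} (hr : ∀ m : ℕ, r ≠ -m) (n : ℕ) :
    Ring.multichoose r n = Gamma (r + n) / (n ! * Gamma r) := by
  have hfactorial := Ring.factorial_nsmul_multichoose_eq_ascPochhammer r n
  rw [Polynomial.ascPochhammer_smeval_eq_eval, nsmul_eq_mul] at hfactorial
  have hGamma := Gamma_ne_zero hr
  rw [Gamma_add_natCast hr, ← hfactorial]
  field_simp

lemma multichoose_add_natCast {R : Type*} [Ring R] [BinomialRing R] (r : R) (k l : ℕ) :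
    Ring.multichoose (r + l) k =
      ∑ ij ∈ antidiagonal k, Ring.multichoose (r + ij.2) ij.1 * l.choose ij.2 := by
  rw [Ring.multichoose_eq, show r + l + k - 1 = (r + k - 1) + l by abel,
    Ring.add_choose_eq k (Nat.cast_commute l _).symm]
  refine sum_congr rfl fun ij hij => ?_
  rw [Ring.multichoose_eq, Ring.choose_natCast, ← mem_antidiagonal.1 hij]
  push_cast
  congr 2
  abel

lemma sum_besselCliffordCoeff_div_factorial (hν : -1 < ν) (k l : ℕ) :
    ∑ j ∈ range (min k l + 1), besselCliffordCoeff ν j / ((k - j)! * (l - j)!) =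
      Gamma ((k + l : ℕ) + ν + 1) * (besselCliffordCoeff ν k * besselCliffordCoeff ν l) := by
  have hGamma := fun n => (Gamma_natCast_add_add_one_pos hν n).ne'
  have hmultichoose : ∀ i j : ℕ, Ring.multichoose (ν + 1 + j) i =
      Gamma ((i + j : ℕ) + ν + 1) / (i ! * Gamma (j + ν + 1)) := fun i j => by
    rw [multichoose_eq_Gamma_div fun m => by
      linarith [j.cast_nonneg (α := ℝ), m.cast_nonneg (α := ℝ)]]
    push_cast
    ring_nf
  have hvandermonde : Gamma ((k + l : ℕ) + ν + 1) / (k ! * Gamma (l + ν + 1)) =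
      ∑ j ∈ range (k + 1), Ring.multichoose (ν + 1 + j) (k - j) * l.choose j := by
    rw [← hmultichoose, multichoose_add_natCast, ← Nat.sum_antidiagonal_swap,
      Nat.sum_antidiagonal_eq_sum_range_succ_mk]
    rfl
  calc _ = ∑ j ∈ range (k + 1), Ring.multichoose (ν + 1 + j) (k - j) * l.choose j /
        (l ! * Gamma (k + ν + 1)) := by
        refine sum_subset_zero_on_sdiff (by grind) (fun j hj => ?_) fun j hj => ?_
        · rw [Nat.choose_eq_zero_of_lt (by grind)]
          simp
        · rw [hmultichoose, Nat.cast_choose ℝ (show j ≤ l by grind),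
            Nat.sub_add_cancel (show j ≤ k by grind), besselCliffordCoeff]
          have := hGamma k
          field_simp
    _ = _ := by
        rw [← sum_div, ← hvandermonde, besselCliffordCoeff, besselCliffordCoeff]
        have hk := hGamma k
        have hl := hGamma l
        field_simp

lemma sum_besselCliffordCoeff_mul_pow_mul_add_pow (hν : -1 < ν) (a b : ℝ) (n : ℕ) :
    ∑ j ∈ range (n / 2 + 1),
        besselCliffordCoeff ν j / (n - 2 * j)! * ((a * b) ^ j * (a + b) ^ (n - 2 * j)) =
      Gamma (n + ν + 1) * ∑ kl ∈ antidiagonal n,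
        besselCliffordCoeff ν kl.1 * a ^ kl.1 * (besselCliffordCoeff ν kl.2 * b ^ kl.2) := by
  have hbinomial : ∀ j, besselCliffordCoeff ν j / (n - 2 * j)! *
      ((a * b) ^ j * (a + b) ^ (n - 2 * j)) = ∑ pq ∈ antidiagonal (n - 2 * j),
        besselCliffordCoeff ν j / (pq.1 ! * pq.2 !) * (a ^ (pq.1 + j) * b ^ (pq.2 + j)) := by
    intro j
    rw [(Commute.all a b).add_pow', mul_sum, mul_sum]
    refine sum_congr rfl fun pq hpq => ?_
    rw [← mem_antidiagonal.1 hpq, nsmul_eq_mul, Nat.cast_add_choose]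
    field_simp
    ring
  have hcoeff : ∀ kl ∈ antidiagonal n, Gamma (n + ν + 1) *
      (besselCliffordCoeff ν kl.1 * a ^ kl.1 * (besselCliffordCoeff ν kl.2 * b ^ kl.2)) =
      ∑ j ∈ range (min kl.1 kl.2 + 1),
        besselCliffordCoeff ν j / ((kl.1 - j)! * (kl.2 - j)!) * (a ^ kl.1 * b ^ kl.2) := by
    intro kl hkl
    rw [← sum_mul, sum_besselCliffordCoeff_div_factorial hν, mem_antidiagonal.1 hkl]
    ring
  rw [mul_sum, sum_congr rfl hcoeff, sum_congr rfl fun j _ => hbinomial j, sum_sigma', sum_sigma']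
  refine sum_nbij' (fun s => ⟨(s.2.1 + s.1, s.2.2 + s.1), s.1⟩)
    (fun s => ⟨s.2, (s.1.1 - s.2, s.1.2 - s.2)⟩) ?_ ?_ ?_ ?_ ?_
  · rintro ⟨j, p, q⟩ h
    simp only [mem_sigma, mem_range, HasAntidiagonal.mem_antidiagonal] at h ⊢
    omega
  · rintro ⟨⟨k, l⟩, j⟩ h
    simp only [mem_sigma, mem_range, HasAntidiagonal.mem_antidiagonal] at h ⊢
    omega
  · rintro ⟨j, p, q⟩ -
    simp
  · rintro ⟨⟨k, l⟩, j⟩ h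
    simp only [mem_sigma, mem_range, HasAntidiagonal.mem_antidiagonal] at h
    simp only [Nat.sub_add_cancel (show j ≤ k by omega), Nat.sub_add_cancel (show j ≤ l by omega)]
  · rintro ⟨j, p, q⟩ -
    simp

end BesselClifford

section GegenbauerWeight

open Real Finset intervalIntegral
open scoped Nat

variable {α : ℝ} {E : Type*} [NormedAddCommGroup E]

lemma intervalIntegrable_neg_of_even {f : ℝ → E} (hf : f.Even) {r : ℝ}
    (hint : IntervalIntegrable f volume 0 r) : IntervalIntegrable f volume (-r) 0 := by
  rw [IntervalIntegrable.iff_comp_neg]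
  simpa [hf _] using hint.symm

lemma integral_of_even [NormedSpace ℝ E] {f : ℝ → E} (hf : f.Even) {r : ℝ}
    (hint : IntervalIntegrable f volume 0 r) :
    ∫ x in -r..r, f x = (2 : ℝ) • ∫ x in 0..r, f x := by
  have hneg : ∫ x in -r..0, f x = ∫ x in 0..r, f x := by
    simpa [hf _] using (integral_comp_neg (a := 0) (b := r) f).symm
  rw [two_smul, ← integral_add_adjacent_intervals (intervalIntegrable_neg_of_even hf hint) hint,
    hneg]

lemma integral_of_odd [NormedSpace ℝ E] {f : ℝ → E} (hf : f.Odd) (r : ℝ) :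
    ∫ x in -r..r, f x = 0 := by
  have := IsAddTorsionFree.of_isTorsionFree ℝ E
  refine self_eq_neg.1 ?_
  simpa [hf _] using (integral_comp_neg (a := -r) (b := r) f).symm

lemma integral_rpow_mul_one_sub_rpow {p q : ℝ} (hp : 0 < p) (hq : 0 < q) :
    ∫ u in (0 : ℝ)..1, u ^ (p - 1) * (1 - u) ^ (q - 1) = ProbabilityTheory.beta p q := by
  have hofReal : Complex.betaIntegral p q =
      ∫ u in (0 : ℝ)..1, ((u ^ (p - 1) * (1 - u) ^ (q - 1) : ℝ) : ℂ) := by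
    refine integral_congr fun u hu => ?_
    obtain ⟨h0, h1⟩ : 0 ≤ u ∧ u ≤ 1 := by simpa using hu
    push_cast [Complex.ofReal_cpow h0, Complex.ofReal_cpow (sub_nonneg.2 h1)]
    rfl
  rw [ProbabilityTheory.beta_eq_betaIntegralReal p q hp hq, hofReal, integral_ofReal,
    Complex.ofReal_re]

/-- The weight on `[-1, 1]` for which the Gegenbauer polynomials of parameter `α` are orthogonal;
the product of two Bessel functions of order `α` is an average against it. -/
noncomputable def gegenbauerWeight (α s : ℝ) : ℝ := (1 - s ^ 2) ^ (α - 1 / 2)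

lemma gegenbauerWeight_even (α : ℝ) : (gegenbauerWeight α).Even := fun s => by
  simp [gegenbauerWeight]

lemma integral_zero_one_even_pow_mul_gegenbauerWeight (hα : -1 / 2 < α) (j : ℕ) :
    ∫ s in (0 : ℝ)..1, s ^ (2 * j) * gegenbauerWeight α s =
      ProbabilityTheory.beta (j + 1 / 2) (α + 1 / 2) / 2 := by
  have hsubst := integral_Icc_deriv_smul_of_deriv_nonneg (a := 0) (b := 1) (f := fun s : ℝ => s ^ 2)
    (f' := fun s => 2 * s) (g := fun u => u ^ (j + 1 / 2 - 1 : ℝ) * (1 - u) ^ (α + 1 / 2 - 1))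
    (by fun_prop) (fun s _ => by simpa using hasDerivAt_pow 2 s)
    (fun s hs => by linarith [hs.1]) zero_le_one
  rw [zero_pow two_ne_zero, one_pow, integral_Icc_eq_integral_Ioc, integral_Icc_eq_integral_Ioc,
    ← integral_of_le zero_le_one, ← integral_of_le zero_le_one,
    integral_rpow_mul_one_sub_rpow (by positivity) (by linarith)] at hsubst
  rw [← hsubst, eq_div_iff two_ne_zero, ← intervalIntegral.integral_mul_const]
  refine integral_congr_Ioo_of_le zero_le_one fun s hs => ?_
  have hpow : s * (s ^ 2) ^ (j + 1 / 2 - 1 : ℝ) = s ^ (2 * j) := by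
    rw [← rpow_natCast s 2, ← rpow_natCast s (2 * j), ← rpow_mul hs.1.le]
    nth_rw 1 [← rpow_one s]
    rw [← rpow_add hs.1]
    push_cast
    ring_nf
  simp only [gegenbauerWeight, smul_eq_mul, ← hpow]
  ring_nf

lemma intervalIntegrable_gegenbauerWeight (hα : -1 / 2 < α) :
    IntervalIntegrable (gegenbauerWeight α) volume (-1) 1 := by
  have hint : IntervalIntegrable (gegenbauerWeight α) volume 0 1 := by
    -- The integral over `[0, 1]` is a nonzero beta value, not the junk value `0`.
    refine intervalIntegrable_of_integral_ne_zero ?_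
    have hbeta := ProbabilityTheory.beta_pos (α := ((0 : ℕ) : ℝ) + 1 / 2) (by norm_num)
      (show 0 < α + 1 / 2 by linarith)
    simpa using (integral_zero_one_even_pow_mul_gegenbauerWeight hα 0).trans_ne (by positivity)
  exact (intervalIntegrable_neg_of_even (gegenbauerWeight_even α) hint).trans hint

lemma integral_odd_pow_mul_gegenbauerWeight (α : ℝ) (j : ℕ) :
    ∫ s in (-1 : ℝ)..1, s ^ (2 * j + 1) * gegenbauerWeight α s = 0 :=
  integral_of_odd (fun s => by
    rw [gegenbauerWeight_even α s, Odd.neg_pow ⟨j, rfl⟩, neg_mul]) 1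

lemma Gamma_natCast_add_half_mul_factorial (j : ℕ) :
    Gamma (j + 1 / 2) * j ! = (2 * j)! / 4 ^ j * √π := by
  have hduplication := Gamma_mul_Gamma_add_half (j + 1 / 2)
  rw [show (j : ℝ) + 1 / 2 + 1 / 2 = j + 1 by ring, Gamma_nat_eq_factorial,
    show 2 * ((j : ℝ) + 1 / 2) = (2 * j : ℕ) + 1 by push_cast; ring, Gamma_nat_eq_factorial,
    sub_add_cancel_right, rpow_neg zero_le_two, rpow_natCast, pow_mul,
    show (2 : ℝ) ^ 2 = 4 by norm_num] at hduplication
  exact hduplication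

lemma integral_even_pow_mul_gegenbauerWeight (hα : -1 / 2 < α) (j : ℕ) :
    ∫ s in (-1 : ℝ)..1, s ^ (2 * j) * gegenbauerWeight α s =
      √π * Gamma (α + 1 / 2) * ((2 * j)! / 4 ^ j) * besselCliffordCoeff α j := by
  have heven : (fun s => s ^ (2 * j) * gegenbauerWeight α s).Even := fun s => by
    simp only [gegenbauerWeight_even α s, Even.neg_pow ⟨j, two_mul j⟩ s]
  have hint : IntervalIntegrable (fun s => s ^ (2 * j) * gegenbauerWeight α s) volume 0 1 :=
    ((intervalIntegrable_gegenbauerWeight hα).mono_set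
      (by norm_num [Set.Icc_subset_Icc_left])).continuousOn_mul (by fun_prop)
  rw [integral_of_even heven hint, smul_eq_mul, integral_zero_one_even_pow_mul_gegenbauerWeight hα,
    ProbabilityTheory.beta, besselCliffordCoeff]
  have hGamma := (Gamma_natCast_add_add_one_pos (show -1 < α by linarith) j).ne'
  calc _ = Gamma (j + 1 / 2) * j ! * Gamma (α + 1 / 2) * (1 / (j ! * Gamma (j + α + 1))) := by
        rw [show (j : ℝ) + 1 / 2 + (α + 1 / 2) = j + α + 1 by ring]
        field_simp
    _ = _ := by
        rw [Gamma_natCast_add_half_mul_factorial]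
        ring

lemma integral_gegenbauerWeight (hα : -1 / 2 < α) :
    ∫ s in (-1 : ℝ)..1, gegenbauerWeight α s = √π * Gamma (α + 1 / 2) / Gamma (α + 1) := by
  simpa [besselCliffordCoeff, div_eq_mul_inv] using integral_even_pow_mul_gegenbauerWeight hα 0

lemma integral_add_two_mul_pow_mul_gegenbauerWeight (hα : -1 / 2 < α) {a b c : ℝ}
    (hc : c ^ 2 = a * b) (n : ℕ) :
    ∫ s in (-1 : ℝ)..1, (a + b + 2 * c * s) ^ n * gegenbauerWeight α s =
      √π * Gamma (α + 1 / 2) * n ! * ∑ j ∈ range (n / 2 + 1),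
        besselCliffordCoeff α j / (n - 2 * j)! * ((a * b) ^ j * (a + b) ^ (n - 2 * j)) := by
  have hbinomial : ∀ s, (a + b + 2 * c * s) ^ n * gegenbauerWeight α s =
      ∑ i ∈ range (n + 1), (2 * c) ^ i * (a + b) ^ (n - i) * n.choose i *
        (s ^ i * gegenbauerWeight α s) := by
    intro s
    rw [add_comm, add_pow, sum_mul]
    refine sum_congr rfl fun i _ => ?_
    rw [mul_pow]
    ring
  simp_rw [hbinomial]
  rw [integral_finsetSum fun i _ => ((intervalIntegrable_gegenbauerWeight hα).continuousOn_mul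
    (by fun_prop)).const_mul _]
  simp_rw [intervalIntegral.integral_const_mul]
  rw [mul_sum]
  refine (sum_of_injOn (2 * ·) (fun i _ j _ h => by simpa using h) (fun j hj => ?_)
    (fun i hi hi_odd => ?_) fun j hj => ?_).symm
  · simp only [coe_range, Set.mem_Iio] at hj ⊢
    omega
  · obtain ⟨j, rfl | rfl⟩ := i.even_or_odd'
    · exact absurd ⟨j, by grind, rfl⟩ hi_odd
    · rw [integral_odd_pow_mul_gegenbauerWeight, mul_zero]
  · rw [integral_even_pow_mul_gegenbauerWeight hα,
      Nat.cast_choose ℝ (show 2 * j ≤ n by grind), pow_mul (2 * c), mul_pow 2 c, hc, mul_pow]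
    rw [show (2 : ℝ) ^ 2 = 4 by norm_num, mul_pow, mul_pow]
    field_simp

lemma gegenbauerWeight_nonneg {s : ℝ} (hs : |s| ≤ 1) : 0 ≤ gegenbauerWeight α s :=
  rpow_nonneg (sub_nonneg.2 ((sq_le_one_iff_abs_le_one s).2 hs)) _

lemma hasSum_integral_besselCliffordCoeff_mul_pow_mul_gegenbauerWeight (hα : -1 / 2 < α)
    (u v : ℝ) :
    HasSum (fun n => ∫ s in (-1 : ℝ)..1,
        besselCliffordCoeff α n * (u + v * s) ^ n * gegenbauerWeight α s)
      (∫ s in (-1 : ℝ)..1, besselClifford α (u + v * s) * gegenbauerWeight α s) := by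
  have hν : -1 < α := by linarith
  have hw := intervalIntegrable_gegenbauerWeight hα
  refine hasSum_integral_of_dominated_convergence
    (fun n s => besselCliffordCoeff α n * (|u| + |v|) ^ n * gegenbauerWeight α s)
    (fun n => (intervalIntegrable_iff.1 (hw.continuousOn_mul (by fun_prop))).aestronglyMeasurable)
    (fun n => .of_forall fun s hs => ?_)
    (.of_forall fun s _ => (summable_besselCliffordCoeff_mul_pow hν _).mul_right _) ?_
    (.of_forall fun s _ => (summable_besselCliffordCoeff_mul_pow hν _).hasSum.mul_right _)
  · have habs : |s| ≤ 1 := by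
      rw [Set.uIoc_of_le (by norm_num)] at hs
      exact abs_le.2 ⟨hs.1.le, hs.2⟩
    have hbase : |u + v * s| ≤ |u| + |v| := by
      refine (abs_add_le _ _).trans ?_
      rw [abs_mul]
      gcongr
      exact mul_le_of_le_one_right (abs_nonneg _) habs
    rw [norm_mul, norm_mul, norm_pow, Real.norm_of_nonneg (besselCliffordCoeff_pos hν n).le,
      Real.norm_of_nonneg (gegenbauerWeight_nonneg habs), Real.norm_eq_abs]
    have := (besselCliffordCoeff_pos hν n).le
    have := gegenbauerWeight_nonneg (α := α) habs
    gcongr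
  · simp_rw [tsum_mul_right]
    exact hw.const_mul _

theorem besselClifford_mul_besselClifford (hα : -1 / 2 < α) {a b c : ℝ} (hc : c ^ 2 = a * b) :
    besselClifford α a * besselClifford α b = (√π * Gamma (α + 1 / 2))⁻¹ *
      ∫ s in (-1 : ℝ)..1, besselClifford α (a + b + 2 * c * s) * gegenbauerWeight α s := by
  have hν : -1 < α := by linarith
  have hmoment : ∀ n : ℕ, ∫ s in (-1 : ℝ)..1,
      besselCliffordCoeff α n * (a + b + 2 * c * s) ^ n * gegenbauerWeight α s =
        √π * Gamma (α + 1 / 2) * ∑ kl ∈ antidiagonal n,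
          besselCliffordCoeff α kl.1 * a ^ kl.1 * (besselCliffordCoeff α kl.2 * b ^ kl.2) := by
    intro n
    have hGamma := (Gamma_natCast_add_add_one_pos hν n).ne'
    simp_rw [mul_assoc (besselCliffordCoeff α n), intervalIntegral.integral_const_mul]
    rw [integral_add_two_mul_pow_mul_gegenbauerWeight hα hc,
      sum_besselCliffordCoeff_mul_pow_mul_add_pow hν, besselCliffordCoeff]
    field_simp
  have hGamma := Gamma_pos_of_pos (show 0 < α + 1 / 2 by linarith)
  rw [← (hasSum_integral_besselCliffordCoeff_mul_pow_mul_gegenbauerWeight hα _ _).tsum_eq,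
    tsum_congr hmoment, tsum_mul_left, inv_mul_cancel_left₀ (by positivity)]
  exact tsum_mul_tsum_eq_tsum_sum_antidiagonal_of_summable_norm
    (summable_besselCliffordCoeff_mul_pow hν a).norm
    (summable_besselCliffordCoeff_mul_pow hν b).norm

lemma besselJR_sqrt (ν : ℝ) {u : ℝ} (hu : 0 ≤ u) :
    besselJR ν √u = Gamma (ν + 1) * besselClifford ν (-u / 4) := by
  rw [besselJR_eq_besselClifford, sq_sqrt hu]

theorem besselJR_mul_besselJR (hα : -1 / 2 < α) (x y : ℝ) :
    besselJR α x * besselJR α y = Gamma (α + 1) / (√π * Gamma (α + 1 / 2)) *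
      ∫ s in (-1 : ℝ)..1, besselJR α √(x ^ 2 + y ^ 2 + 2 * x * y * s) * gegenbauerWeight α s := by
  have hsqrt : ∀ s ∈ Set.Ioo (-1 : ℝ) 1, besselJR α √(x ^ 2 + y ^ 2 + 2 * x * y * s) =
      Gamma (α + 1) *
        besselClifford α (-x ^ 2 / 4 + -y ^ 2 / 4 + 2 * (-(x * y) / 4) * s) := fun s hs => by
    rw [besselJR_sqrt]
    · ring_nf
    · have hy : 0 ≤ y ^ 2 * (1 - s ^ 2) :=
        mul_nonneg (sq_nonneg y) (by nlinarith [hs.1, hs.2])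
      nlinarith [sq_nonneg (x + y * s)]
  rw [integral_congr_Ioo_of_le (by norm_num) fun s hs => by rw [hsqrt s hs, mul_assoc],
    intervalIntegral.integral_const_mul, besselJR_eq_besselClifford, besselJR_eq_besselClifford,
    mul_mul_mul_comm,
    besselClifford_mul_besselClifford hα (show (-(x * y) / 4) ^ 2 = -x ^ 2 / 4 * (-y ^ 2 / 4) by
      ring)]
  ring

end GegenbauerWeight

section BesselProductKernel

open Real

variable {α x y z : ℝ}

lemma sq_sub_mul_sub_sq_nonneg (hz : z ∈ Set.Icc |x - y| (x + y)) :
    0 ≤ (z ^ 2 - (x - y) ^ 2) * ((x + y) ^ 2 - z ^ 2) := by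
  have hz0 : 0 ≤ z := (abs_nonneg _).trans hz.1
  refine mul_nonneg (sub_nonneg.2 ?_) (sub_nonneg.2 ?_)
  · exact sq_le_sq.2 (hz.1.trans_eq (abs_of_nonneg hz0).symm)
  · exact pow_le_pow_left₀ hz0 hz.2 2

lemma besselProdKernel_mul_rpow_nonneg (hα : -1 / 2 < α) (hx : 0 < x) (hy : 0 < y) (z : ℝ) :
    0 ≤ besselProdKernel α x y z * z ^ (2 * α + 1) := by
  by_cases hz : z ∈ Set.Icc |x - y| (x + y)
  · rw [besselProdKernel, Set.indicator_of_mem hz]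
    have hz0 : 0 ≤ z := (abs_nonneg _).trans hz.1
    have hbase := sq_sub_mul_sub_sq_nonneg hz
    have hGamma₁ := Gamma_pos_of_pos (show 0 < α + 1 by linarith)
    have hGamma₂ := Gamma_pos_of_pos (show 0 < α + 1 / 2 by linarith)
    positivity
  · rw [besselProdKernel, Set.indicator_of_notMem hz, zero_mul]

lemma besselProdKernel_mul_rpow (hα : -1 / 2 < α) (hx : 0 < x) (hy : 0 < y)
    (hz : z ∈ Set.Icc |x - y| (x + y)) :
    besselProdKernel α x y z * z ^ (2 * α + 1) =
      Gamma (α + 1) / (√π * Gamma (α + 1 / 2)) *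
        (gegenbauerWeight α ((z ^ 2 - x ^ 2 - y ^ 2) / (2 * x * y)) * (z / (x * y))) := by
  rcases ((abs_nonneg _).trans hz.1).eq_or_lt with rfl | hz0
  · rw [zero_rpow (by linarith)]
    simp
  have hxy : 0 < x * y := mul_pos hx hy
  have hfactor : (z ^ 2 - (x - y) ^ 2) * ((x + y) ^ 2 - z ^ 2) =
      (2 * (x * y)) ^ 2 * (1 - ((z ^ 2 - x ^ 2 - y ^ 2) / (2 * x * y)) ^ 2) := by
    field_simp
    ring
  have hbase : 0 ≤ 1 - ((z ^ 2 - x ^ 2 - y ^ 2) / (2 * x * y)) ^ 2 :=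
    nonneg_of_mul_nonneg_right (hfactor ▸ sq_sub_mul_sub_sq_nonneg hz) (by positivity)
  have hscale : ((2 * (x * y)) ^ 2) ^ (α - 1 / 2) =
      (2 ^ (1 - 2 * α))⁻¹ * ((x * y) ^ (2 * α) / (x * y)) := by
    rw [← rpow_natCast, ← rpow_mul (by positivity), mul_rpow zero_le_two hxy.le,
      ← rpow_neg zero_le_two, ← rpow_sub_one hxy.ne']
    push_cast
    ring_nf
  rw [besselProdKernel, Set.indicator_of_mem hz, hfactor, mul_rpow (sq_nonneg _) hbase, hscale,
    ← gegenbauerWeight, mul_rpow hxy.le hz0.le, rpow_add_one hz0.ne']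
  have htwo : (2 : ℝ) ^ (1 - 2 * α) ≠ 0 := by positivity
  generalize (2 : ℝ) ^ (1 - 2 * α) = p at htwo ⊢
  field_simp

lemma integral_comp_sq_mul_besselProdKernel (hα : -1 / 2 < α) (hx : 0 < x) (hy : 0 < y)
    (f : ℝ → ℝ) :
    ∫ z in Set.Ioi (0 : ℝ), f (z ^ 2) * (besselProdKernel α x y z * z ^ (2 * α + 1)) =
      Gamma (α + 1) / (√π * Gamma (α + 1 / 2)) *
        ∫ s in (-1 : ℝ)..1, f (x ^ 2 + y ^ 2 + 2 * x * y * s) * gegenbauerWeight α s := by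
  have hle : |x - y| ≤ x + y := abs_le.2 ⟨by linarith, by linarith⟩
  have hderiv : ∀ z, HasDerivAt (fun z => (z ^ 2 - x ^ 2 - y ^ 2) / (2 * x * y)) (z / (x * y)) z :=
      fun z => by
    convert! (((hasDerivAt_pow 2 z).sub_const (x ^ 2)).sub_const (y ^ 2)).div_const (2 * x * y)
      using 1
    push_cast
    field_simp
  have hsubst := integral_Icc_deriv_smul_of_deriv_nonneg (a := |x - y|) (b := x + y)
    (f := fun z => (z ^ 2 - x ^ 2 - y ^ 2) / (2 * x * y)) (f' := fun z => z / (x * y))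
    (g := fun s => f (x ^ 2 + y ^ 2 + 2 * x * y * s) * gegenbauerWeight α s) (by fun_prop)
    (fun z _ => hderiv z)
    (fun z hz => div_nonneg ((abs_nonneg _).trans hz.1.le) (mul_pos hx hy).le) hle
  have hlower : (|x - y| ^ 2 - x ^ 2 - y ^ 2) / (2 * x * y) = -1 := by
    rw [sq_abs]
    field_simp
    ring
  have hupper : ((x + y) ^ 2 - x ^ 2 - y ^ 2) / (2 * x * y) = 1 := by
    field_simp
    ring
  rw [hlower, hupper, integral_Icc_eq_integral_Ioc (x := -1),
    ← intervalIntegral.integral_of_le (by norm_num)] at hsubst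
  rw [← integral_Ici_eq_integral_Ioi, setIntegral_eq_of_subset_of_forall_sdiff_eq_zero
    measurableSet_Ici ((Set.Icc_subset_Ici_iff hle).2 (abs_nonneg _)) (fun z hz => ?_),
    ← hsubst, ← integral_const_mul]
  · refine setIntegral_congr_fun measurableSet_Icc fun z hz => ?_
    have hcancel : x ^ 2 + y ^ 2 + 2 * x * y * ((z ^ 2 - x ^ 2 - y ^ 2) / (2 * x * y)) = z ^ 2 := by
      field_simp
      ring
    simp only [besselProdKernel_mul_rpow hα hx hy hz, hcancel, smul_eq_mul]
    ring
  · rw [besselProdKernel, Set.indicator_of_notMem hz.2, zero_mul, mul_zero]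

end BesselProductKernel

theorem bessel_product_formula_general (α : ℝ) (hα : -1 / 2 < α) (x y : ℝ) (hx : 0 < x)
    (hy : 0 < y) :
    (∀ z : ℝ, 0 ≤ besselProdKernel α x y z * z ^ (2 * α + 1))
    ∧ (∫ z in Set.Ioi (0 : ℝ), besselProdKernel α x y z * z ^ (2 * α + 1) = 1)
    ∧ (∀ t : ℝ, besselJR α (x * t) * besselJR α (y * t)
        = ∫ z in Set.Ioi (0 : ℝ),
            besselJR α (z * t) * (besselProdKernel α x y z * z ^ (2 * α + 1))) := by
  refine ⟨besselProdKernel_mul_rpow_nonneg hα hx hy, ?_, fun t => ?_⟩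
  · have hGamma₁ := Real.Gamma_pos_of_pos (show 0 < α + 1 by linarith)
    have hGamma₂ := Real.Gamma_pos_of_pos (show 0 < α + 1 / 2 by linarith)
    have hmass := integral_comp_sq_mul_besselProdKernel hα hx hy fun _ => 1
    simp only [one_mul, integral_gegenbauerWeight hα] at hmass
    rw [hmass, div_mul_div_cancel₀ (by positivity), div_self hGamma₁.ne']
  · have hsq : ∀ z, besselJR α (z * t) = besselJR α √(t ^ 2 * z ^ 2) := fun z => by
      rw [besselJR_sqrt α (by positivity), besselJR_eq_besselClifford]
      ring_nf
    simp_rw [besselJR_mul_besselJR hα, hsq _]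
    rw [integral_comp_sq_mul_besselProdKernel hα hx hy fun u => besselJR α √(t ^ 2 * u)]
    ring_nf

/-- for `α ≥ 1/2` and `x, y > 0`, `dν^α_{x,y}(z) = m_α(x,y,z) z^{2α+1} dz`
is a probability measure on `[|x−y|, x+y]` and satisfies the Bessel product formula
`j_α(xt) j_α(yt) = ∫_0^∞ j_α(zt) dν^α_{x,y}(z)` for all real `t`. -/
theorem bessel_product_formula (α : ℝ) (hα : 1/2 ≤ α) (x y : ℝ) (hx : 0 < x) (hy : 0 < y) :
    (∀ z : ℝ, 0 ≤ besselProdKernel α x y z * z ^ (2 * α + 1))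
    ∧ (∫ z in Set.Ioi (0 : ℝ), besselProdKernel α x y z * z ^ (2 * α + 1) = 1)
    ∧ (∀ t : ℝ, besselJR α (x * t) * besselJR α (y * t)
        = ∫ z in Set.Ioi (0 : ℝ),
            besselJR α (z * t) * (besselProdKernel α x y z * z ^ (2 * α + 1))) :=
  bessel_product_formula_general α (by linarith) x y hx hy
end

section
/- For all λ ≥ 0, r ∈ ℝ and t ∈ [−1,1], one has the expansion e^{irt} = Σ_{n=0}^∞ (ir/2)^n ((2λ)_n/((λ)_n n!)) j_{n+λ}(r) C̃_n^λ(t), with locally uniform convergence in (r,t); here C̃_n^λ is the Gegenbauer polynomial normalized by C̃_n^λ(1) = 1, i.e. C̃_n^λ(x) = ₂F₁(−n, n+2λ; λ+1/2; (1−x)/2), and (a)_n is the Pochhammer symbol (with the limiting interpretation when λ = 0). -/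
open Filter

/-- The Pochhammer symbol `(a)_n`. -/
noncomputable def poch (a : ℝ) (n : ℕ) : ℝ := (ascPochhammer ℝ n).eval a

/-- The Gegenbauer polynomial normalized by `C̃_n^λ(1) = 1`, i.e.
`C̃_n^λ(x) = ₂F₁(−n, n+2λ; λ+1/2; (1−x)/2)`. -/
noncomputable def gegenbauerN (lam : ℝ) (n : ℕ) (x : ℝ) : ℝ :=
  ∑ j ∈ Finset.range (n + 1),
    poch (-(n : ℝ)) j * poch ((n : ℝ) + 2 * lam) j /
      (poch (lam + 1/2) j * (j.factorial : ℝ)) * ((1 - x) / 2) ^ j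

/-- The coefficient `(2λ)_n / (λ)_n`, with its limiting interpretation at `λ = 0`
(namely `1` for `n = 0` and `2` for `n ≥ 1`). -/
noncomputable def gegenCoeff (lam : ℝ) (n : ℕ) : ℝ :=
  if lam = 0 then (if n = 0 then 1 else 2) else poch (2 * lam) n / poch lam n

/-!
Write the `n`-th term as `a_n(r) G_n(t)`, where `a_n(r) = (ir/2)ⁿ / n! · j_{n+λ}(r)` and `G_n` is
`2ⁿ` times the monic Gegenbauer polynomial. The recurrence `G_{n+2} = 2t G_{n+1} - β_n G_n` and the
derivative `a_{n+1}' = (i/2)(a_n + β_{n+1} a_{n+2})` involve the same coefficients `β_n`, so that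
`∑_{n ≤ N} (a_n' - i t a_n) G_n` telescopes, as in the Christoffel–Darboux formula, to
`-(i/2)(a_N G_{N+1} - β_N a_{N+1} G_N)`. Hence the partial sums solve `S' = i t S` up to an error
that tends to `0`; since they equal `1` at `r = 0`, they converge to `exp (i r t)`.
-/

lemma poch_zero (a : ℝ) : poch a 0 = 1 := by simp [poch]

lemma poch_succ (a : ℝ) (n : ℕ) : poch a (n + 1) = poch a n * (a + n) :=
  ascPochhammer_succ_eval n a

lemma poch_succ_left (a : ℝ) (n : ℕ) : poch a (n + 1) = a * poch (a + 1) n := by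
  simp [poch, ascPochhammer_succ_left, Polynomial.eval_comp]

lemma mul_poch_add_one (a : ℝ) (n : ℕ) : a * poch (a + 1) n = poch a n * (a + n) := by
  rw [← poch_succ_left, poch_succ]

lemma poch_pos {a : ℝ} (ha : 0 < a) (n : ℕ) : 0 < poch a n := ascPochhammer_pos n a ha

lemma poch_neg_natCast_of_lt {n k : ℕ} (h : n < k) : poch (-(n : ℝ)) k = 0 :=
  ascPochhammer_eval_neg_coe_nat_of_lt h

lemma one_le_poch {a : ℝ} (ha : 1 ≤ a) (n : ℕ) : 1 ≤ poch a n := by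
  induction n with
  | zero => rw [poch_zero]
  | succ n ih =>
    rw [poch_succ]
    exact one_le_mul_of_one_le_of_one_le ih (le_add_of_le_of_nonneg ha n.cast_nonneg)

lemma min_one_le_poch {a : ℝ} (ha : 0 < a) (n : ℕ) : min a 1 ≤ poch a n := by
  cases n with
  | zero => simp [poch_zero]
  | succ n =>
    rw [poch_succ_left]
    exact (min_le_left a 1).trans
      (le_mul_of_one_le_right ha.le (one_le_poch (by linarith) n))

lemma Gamma_natCast_add {a : ℝ} (ha : 0 < a) (n : ℕ) :
    Real.Gamma (n + a) = poch a n * Real.Gamma a := by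
  induction n with
  | zero => simp [poch_zero]
  | succ n ih =>
    rw [Nat.cast_succ, add_right_comm, Real.Gamma_add_one (by positivity), ih, poch_succ]
    ring

/-- The confluent hypergeometric limit function `₀F₁(; a; y) = Σ_k y^k / ((a)_k k!)`, through which
the normalized Bessel function is `j_α(x) = ₀F₁(; α + 1; -(x/2)²)`. -/
noncomputable def zeroFOne (a y : ℝ) : ℝ := ∑' k : ℕ, y ^ k / (poch a k * k.factorial)

lemma norm_zeroFOne_term_le {a : ℝ} (ha : 0 < a) (y : ℝ) (k : ℕ) :
    ‖y ^ k / (poch a k * k.factorial)‖ ≤ (min a 1)⁻¹ * (|y| ^ k / k.factorial) := by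
  have : 0 < min a 1 := lt_min ha one_pos
  have hpoch : 0 < poch a k := poch_pos ha k
  rw [norm_div, norm_pow, Real.norm_eq_abs, Real.norm_of_nonneg (by positivity),
    inv_mul_eq_div, div_div, mul_comm _ (min a 1)]
  gcongr
  exact min_one_le_poch ha k

lemma hasSum_zeroFOne {a : ℝ} (ha : 0 < a) (y : ℝ) :
    HasSum (fun k : ℕ => y ^ k / (poch a k * k.factorial)) (zeroFOne a y) :=
  (Summable.of_norm_bounded ((Real.summable_pow_div_factorial |y|).mul_left _)
    (norm_zeroFOne_term_le ha y)).hasSum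

lemma abs_zeroFOne_le {a : ℝ} (ha : 0 < a) (y : ℝ) :
    |zeroFOne a y| ≤ (min a 1)⁻¹ * Real.exp |y| := by
  have hexp : HasSum (fun k : ℕ => |y| ^ k / k.factorial) (Real.exp |y|) := by
    rw [Real.exp_eq_exp_ℝ]
    exact NormedSpace.expSeries_div_hasSum_exp |y|
  exact tsum_of_norm_bounded (hexp.mul_left _) (norm_zeroFOne_term_le ha y)

lemma zeroFOne_zero (a : ℝ) : zeroFOne a 0 = 1 := by
  rw [zeroFOne, tsum_eq_single 0 fun k hk => by simp [hk]]
  simp [poch_zero]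

lemma hasDerivAt_zeroFOne {a : ℝ} (ha : 0 < a) (y : ℝ) :
    HasDerivAt (zeroFOne a) (a⁻¹ * zeroFOne (a + 1) y) y := by
  let term' (k : ℕ) (x : ℝ) : ℝ := k * x ^ (k - 1) / (poch a k * k.factorial)
  have term'_succ (k : ℕ) (x : ℝ) :
      term' (k + 1) x = a⁻¹ * (x ^ k / (poch (a + 1) k * k.factorial)) := by
    simp only [term', poch_succ_left, Nat.factorial_succ, Nat.add_sub_cancel]
    push_cast
    field_simp
  have hasSum_term' (x : ℝ) : HasSum (term' · x) (a⁻¹ * zeroFOne (a + 1) x) := by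
    rw [← hasSum_nat_add_iff' 1]
    simpa [term'_succ, term'] using (hasSum_zeroFOne (by linarith : 0 < a + 1) x).mul_left a⁻¹
  rw [← (hasSum_term' y).tsum_eq]
  refine hasDerivAt_tsum_of_isPreconnected (hasSum_term' (|y| + 1)).summable Metric.isOpen_ball
    (convex_ball (0 : ℝ) (|y| + 1)).isPreconnected
    (fun k x _ => (hasDerivAt_pow k x).div_const _) (fun k x hx => ?_)
    (Metric.mem_ball_self (by positivity)) (hasSum_zeroFOne ha 0).summable (by simp)
  have hpoch : 0 < poch a k := poch_pos ha k
  have hx' : |x| ≤ |y| + 1 := by simpa using (mem_ball_zero_iff.mp hx).le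
  rw [norm_div, norm_mul, norm_pow, Real.norm_eq_abs x, RCLike.norm_natCast,
    Real.norm_of_nonneg (by positivity)]
  simp only [term']
  gcongr

lemma zeroFOne_sub_zeroFOne_add_one {a : ℝ} (ha : 0 < a) (y : ℝ) :
    zeroFOne a y - zeroFOne (a + 1) y = y / (a * (a + 1)) * zeroFOne (a + 2) y := by
  have hterm (k : ℕ) :
      y ^ (k + 1) / (poch a (k + 1) * (k + 1).factorial) -
          y ^ (k + 1) / (poch (a + 1) (k + 1) * (k + 1).factorial) =
        y / (a * (a + 1)) * (y ^ k / (poch (a + 2) k * k.factorial)) := by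
    have hpoch : 0 < poch (a + 2) k := poch_pos (by linarith) k
    have hleft : poch a (k + 1) * (a + 1 + k) = a * ((a + 1) * poch (a + 2) k) := by
      have := mul_poch_add_one (a + 1) k
      rw [show a + 1 + 1 = a + 2 by ring] at this
      rw [this, poch_succ_left, mul_assoc]
    have hright : poch (a + 1) (k + 1) = (a + 1) * poch (a + 2) k := by
      rw [poch_succ_left, add_assoc, one_add_one_eq_two]
    rw [eq_div_of_mul_eq (by positivity) hleft, hright, Nat.factorial_succ]
    push_cast
    field_simp
    ring
  have hdiff := (hasSum_zeroFOne ha y).sub (hasSum_zeroFOne (by linarith : 0 < a + 1) y)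
  have hshift := (hasSum_nat_add_iff' 1).mpr hdiff
  simp only [hterm, Finset.sum_range_one, poch_zero, pow_zero, sub_self, sub_zero] at hshift
  exact hshift.unique ((hasSum_zeroFOne (by linarith : 0 < a + 2) y).mul_left _)

section Bessel

variable {α : ℝ} (hα : -1 < α) (x : ℝ)
include hα

lemma besselJR_eq_zeroFOne : besselJR α x = zeroFOne (α + 1) (-(x / 2) ^ 2) := by
  have hα' : 0 < α + 1 := by linarith
  have hGamma : Real.Gamma (α + 1) ≠ 0 := (Real.Gamma_pos_of_pos hα').ne'
  rw [besselJR, zeroFOne, ← tsum_mul_left]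
  refine tsum_congr fun k => ?_
  have hpoch : poch (α + 1) k ≠ 0 := (poch_pos hα' k).ne'
  rw [add_assoc (k : ℝ), Gamma_natCast_add hα', neg_pow ((x / 2) ^ 2), pow_mul]
  field_simp

lemma abs_besselJR_le : |besselJR α x| ≤ (min (α + 1) 1)⁻¹ * Real.exp ((x / 2) ^ 2) := by
  rw [besselJR_eq_zeroFOne hα]
  refine (abs_zeroFOne_le (by linarith) _).trans_eq ?_
  rw [abs_neg, abs_of_nonneg (sq_nonneg (x / 2))]

lemma besselJR_zero_right : besselJR α 0 = 1 := by
  simp [besselJR_eq_zeroFOne hα, zeroFOne_zero]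

lemma hasDerivAt_besselJR :
    HasDerivAt (besselJR α) (-(x / (2 * (α + 1))) * besselJR (α + 1) x) x := by
  have hα' : 0 < α + 1 := by linarith
  have hinner : HasDerivAt (fun x : ℝ => -(x / 2) ^ 2) (-(x / 2)) x := by
    convert! (((hasDerivAt_id' x).div_const 2).pow 2).neg using 1
    push_cast
    ring
  rw [funext (besselJR_eq_zeroFOne hα), besselJR_eq_zeroFOne (by linarith)]
  convert! (hasDerivAt_zeroFOne hα' _).comp x hinner using 1
  field_simp

lemma besselJR_sub_besselJR_add_one :
    besselJR α x - besselJR (α + 1) x =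
      -((x / 2) ^ 2 / ((α + 1) * (α + 2))) * besselJR (α + 2) x := by
  rw [besselJR_eq_zeroFOne hα, besselJR_eq_zeroFOne (by linarith : -1 < α + 1),
    besselJR_eq_zeroFOne (by linarith : -1 < α + 2),
    zeroFOne_sub_zeroFOne_add_one (by linarith : 0 < α + 1)]
  ring_nf

end Bessel

/-- The coefficient of `((1 - x) / 2) ^ j` in `₂F₁(-ν, ν + 2λ; λ + 1/2; (1 - x) / 2)`, with a real
degree `ν` so that neighbouring degrees are `ν ± 1`. -/
noncomputable def gegenbauerTaylorCoeff (lam ν : ℝ) (j : ℕ) : ℝ :=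
  poch (-ν) j * poch (ν + 2 * lam) j / (poch (lam + 1 / 2) j * j.factorial)

/-- The coefficient `β_n` in the recurrence `2 t G_{n+1} = G_{n+2} + β_n G_n` of the polynomials
`G_n = gegenbauerScaled lam n`. It equals `(n + 1)(n + 2λ) / ((n + λ)(n + 1 + λ))`; writing the
factor `(n + 2λ) / (n + λ)` as `2 - n / (n + λ)` also covers `n = λ = 0`, where `0 / 0 = 0` gives
the limiting value. -/
noncomputable def gegenbauerBeta (lam : ℝ) (n : ℕ) : ℝ :=
  (n + 1) / (n + 1 + lam) * (2 - n / (n + lam))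

/-- The monic Gegenbauer polynomial of degree `n`, multiplied by `2 ^ n`. -/
noncomputable def gegenbauerScaled (lam : ℝ) (n : ℕ) (t : ℝ) : ℝ :=
  gegenCoeff lam n * gegenbauerN lam n t

lemma gegenbauerTaylorCoeff_zero (lam ν : ℝ) : gegenbauerTaylorCoeff lam ν 0 = 1 := by
  simp [gegenbauerTaylorCoeff, poch_zero]

lemma hasSum_gegenbauerN (lam : ℝ) (n : ℕ) (x : ℝ) :
    HasSum (fun j => gegenbauerTaylorCoeff lam n j * ((1 - x) / 2) ^ j) (gegenbauerN lam n x) := by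
  refine hasSum_sum_of_ne_finset_zero fun j hj => ?_
  have hnj : n < j := by simpa using hj
  simp [gegenbauerTaylorCoeff, poch_neg_natCast_of_lt hnj]

lemma gegenbauerN_zero (lam t : ℝ) : gegenbauerN lam 0 t = 1 := by
  simp [gegenbauerN, poch_zero]

lemma gegenCoeff_zero (lam : ℝ) : gegenCoeff lam 0 = 1 := by
  simp [gegenCoeff, poch_zero]

lemma gegenCoeff_one (lam : ℝ) : gegenCoeff lam 1 = 2 := by
  by_cases h : lam = 0
  · simp [gegenCoeff, h]
  · simp [gegenCoeff, h, poch_succ, poch_zero]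

section Gegenbauer

variable {lam : ℝ} (hlam : -1 / 2 < lam)
include hlam

lemma gegenbauerTaylorCoeff_recurrence (ν : ℝ) (j : ℕ) :
    (ν + 2 * lam) * gegenbauerTaylorCoeff lam (ν + 1) (j + 1) +
        ν * gegenbauerTaylorCoeff lam (ν - 1) (j + 1) =
      2 * (ν + lam) *
        (gegenbauerTaylorCoeff lam ν (j + 1) - 2 * gegenbauerTaylorCoeff lam ν j) := by
  have hden : 0 < lam + 1 / 2 := by linarith
  have : 0 < poch (lam + 1 / 2) j := poch_pos hden j
  have hup₁ : poch (-(ν + 1)) (j + 1) = -(ν + 1) * poch (-ν) j := by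
    rw [poch_succ_left]; ring_nf
  have hup₂ : (ν + 2 * lam) * poch (ν + 1 + 2 * lam) (j + 1) =
      poch (ν + 2 * lam) j * (ν + 2 * lam + j) * (ν + 2 * lam + (j + 1)) := by
    rw [add_right_comm, mul_poch_add_one, poch_succ, Nat.cast_succ]
  have hdown₁ : ν * poch (-(ν - 1)) (j + 1) = -(poch (-ν) j * (-ν + j) * (-ν + (j + 1))) := by
    have := mul_poch_add_one (-ν) (j + 1)
    rw [poch_succ (-ν), Nat.cast_succ, show -ν + 1 = -(ν - 1) by ring] at this
    linear_combination -this
  have hdown₂ : poch (ν - 1 + 2 * lam) (j + 1) = (ν - 1 + 2 * lam) * poch (ν + 2 * lam) j := by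
    rw [poch_succ_left]; ring_nf
  simp only [gegenbauerTaylorCoeff]
  rw [mul_div_assoc', mul_left_comm, hup₁, hup₂, mul_div_assoc', ← mul_assoc ν, hdown₁, hdown₂,
    poch_succ (-ν), poch_succ (ν + 2 * lam), poch_succ (lam + 1 / 2), Nat.factorial_succ]
  have hlast : lam + 1 / 2 + j ≠ 0 := by positivity
  push_cast
  generalize hq : lam + 1 / 2 + (j : ℝ) = q at hlast ⊢
  field_simp
  rw [← hq]
  ring

lemma gegenbauerN_one (t : ℝ) : gegenbauerN lam 1 t = t := by
  have hratio : (1 + 2 * lam) / (lam + 1 / 2) = 2 := by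
    rw [div_eq_iff (by linarith)]
    ring
  have hlinear : gegenbauerN lam 1 t = 1 - (1 + 2 * lam) / (lam + 1 / 2) * ((1 - t) / 2) := by
    simp only [gegenbauerN, Finset.sum_range_succ, Finset.sum_range_zero, poch_succ, poch_zero,
      Nat.factorial_zero, Nat.factorial_one, Nat.cast_zero, Nat.cast_one]
    ring
  rw [hlinear, hratio]
  ring

lemma gegenbauerN_recurrence (n : ℕ) (t : ℝ) :
    (n + 1 + 2 * lam) * gegenbauerN lam (n + 2) t + (n + 1) * gegenbauerN lam n t =
      2 * (n + 1 + lam) * t * gegenbauerN lam (n + 1) t := by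
  have htail (m : ℕ) : HasSum
      (fun j => gegenbauerTaylorCoeff lam m (j + 1) * ((1 - t) / 2) ^ (j + 1))
      (gegenbauerN lam m t - 1) := by
    simpa [gegenbauerTaylorCoeff_zero] using
      (hasSum_nat_add_iff' 1).mpr (hasSum_gegenbauerN lam m t)
  have hleft := ((htail (n + 2)).mul_left (n + 1 + 2 * lam)).add ((htail n).mul_left (n + 1 : ℝ))
  have hright := ((htail (n + 1)).sub
    ((hasSum_gegenbauerN lam (n + 1) t).mul_left (1 - t))).mul_left (2 * (n + 1 + lam))
  have hterms := hleft.unique (hright.congr_fun fun j => ?_)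
  · linear_combination hterms
  · have hrec := gegenbauerTaylorCoeff_recurrence hlam (n + 1) j
    rw [add_sub_cancel_right, add_assoc (n : ℝ) 1 1, one_add_one_eq_two] at hrec
    push_cast
    linear_combination ((1 - t) / 2) ^ (j + 1) * hrec

lemma gegenCoeff_succ (n : ℕ) :
    gegenCoeff lam (n + 1) = (2 - n / (n + lam)) * gegenCoeff lam n := by
  rcases n.eq_zero_or_pos with rfl | hn
  · simp [gegenCoeff_zero, gegenCoeff_one]
  · rcases eq_or_ne lam 0 with rfl | h0
    · have : (n : ℝ) ≠ 0 := by positivity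
      norm_num [gegenCoeff, hn.ne', this]
    · have hn1 : (1 : ℝ) ≤ n := by exact_mod_cast hn
      have hsum : (n : ℝ) + lam ≠ 0 := by linarith
      simp only [gegenCoeff, h0, if_false, poch_succ, add_comm lam]
      field_simp
      ring

lemma abs_gegenbauerBeta_le (n : ℕ) : |gegenbauerBeta lam n| ≤ 4 := by
  have hn : (0 : ℝ) ≤ n := n.cast_nonneg
  have hfirst : 0 ≤ (n + 1) / (n + 1 + lam) ∧ (n + 1) / (n + 1 + lam) ≤ 2 :=
    ⟨div_nonneg (by linarith) (by linarith), (div_le_iff₀ (by linarith)).mpr (by linarith)⟩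
  have hquot : 0 ≤ n / (n + lam) ∧ n / (n + lam) ≤ 2 := by
    rcases n.eq_zero_or_pos with rfl | hpos
    · simp
    · have hn1 : (1 : ℝ) ≤ n := by exact_mod_cast hpos
      exact ⟨div_nonneg hn (by linarith), (div_le_iff₀ (by linarith)).mpr (by linarith)⟩
  rw [gegenbauerBeta, abs_mul, abs_of_nonneg hfirst.1, abs_of_nonneg (by linarith)]
  nlinarith

lemma gegenbauerScaled_recurrence (n : ℕ) (t : ℝ) :
    gegenbauerScaled lam (n + 2) t =
      2 * t * gegenbauerScaled lam (n + 1) t - gegenbauerBeta lam n * gegenbauerScaled lam n t := by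
  have : (0 : ℝ) ≤ n := n.cast_nonneg
  have hne : (n : ℝ) + 1 + lam ≠ 0 := by linarith
  have hbeta : gegenbauerBeta lam n * gegenCoeff lam n =
      (n + 1) / (n + 1 + lam) * gegenCoeff lam (n + 1) := by
    rw [gegenbauerBeta, gegenCoeff_succ hlam, mul_assoc]
  have hcoeff : gegenCoeff lam (n + 2) =
      (n + 1 + 2 * lam) / (n + 1 + lam) * gegenCoeff lam (n + 1) := by
    rw [gegenCoeff_succ hlam (n + 1), Nat.cast_succ]
    congr 1
    field_simp
    ring
  simp only [gegenbauerScaled]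
  rw [← mul_assoc (gegenbauerBeta lam n), hbeta, hcoeff]
  field_simp
  linear_combination gegenCoeff lam (n + 1) * gegenbauerN_recurrence hlam n t

lemma abs_gegenbauerScaled_le (n : ℕ) (t : ℝ) :
    |gegenbauerScaled lam n t| ≤ (2 * |t| + 2) ^ n := by
  induction n using Nat.twoStepInduction with
  | zero => simp [gegenbauerScaled, gegenCoeff_zero, gegenbauerN_zero]
  | one => simp [gegenbauerScaled, gegenCoeff_one, gegenbauerN_one hlam, abs_mul]
  | more n ih₀ ih₁ =>
    have hβ := abs_gegenbauerBeta_le hlam n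
    calc |gegenbauerScaled lam (n + 2) t|
        ≤ 2 * |t| * |gegenbauerScaled lam (n + 1) t| +
            |gegenbauerBeta lam n| * |gegenbauerScaled lam n t| := by
          rw [gegenbauerScaled_recurrence hlam]
          refine (abs_sub _ _).trans_eq ?_
          simp only [abs_mul, abs_two]
      _ ≤ 2 * |t| * (2 * |t| + 2) ^ (n + 1) + 4 * (2 * |t| + 2) ^ n := by gcongr
      _ ≤ (2 * |t| + 2) ^ (n + 2) := by
          have : 0 ≤ 4 * |t| * (2 * |t| + 2) ^ n := by positivity
          linear_combination this

end Gegenbauer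

lemma hasDerivAt_const_mul_ofReal (c : ℂ) (s : ℝ) : HasDerivAt (fun s : ℝ => c * s) c s := by
  simpa using (hasDerivAt_id s).ofReal_comp.const_mul c

lemma norm_sub_mul_exp_le {f f' : ℝ → ℂ} {c : ℂ} {δ r : ℝ} (hc : c.re = 0)
    (hf : ∀ s, HasDerivAt f (f' s) s) (hδ : ∀ s, |s| ≤ |r| → ‖f' s - c * f s‖ ≤ δ) :
    ‖f r - f 0 * Complex.exp (c * r)‖ ≤ δ * |r| := by
  have hunit (s : ℝ) : ‖Complex.exp (-c * s)‖ = 1 := by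
    simp [Complex.norm_exp, hc]
  let g (s : ℝ) : ℂ := Complex.exp (-c * s) * f s
  have hg (s : ℝ) : HasDerivAt g (Complex.exp (-c * s) * (f' s - c * f s)) s := by
    convert! (hasDerivAt_const_mul_ofReal (-c) s).cexp.mul (hf s) using 1
    ring
  have hmean : ‖g r - g 0‖ ≤ δ * ‖r - 0‖ :=
    (convex_closedBall (0 : ℝ) |r|).norm_image_sub_le_of_norm_hasDerivWithin_le
      (fun s _ => (hg s).hasDerivWithinAt)
      (fun s hs => by
        rw [norm_mul, hunit, one_mul]
        exact hδ s (mem_closedBall_zero_iff.mp hs))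
      (Metric.mem_closedBall_self (abs_nonneg r)) (mem_closedBall_zero_iff.mpr le_rfl)
  have hfactor : g r - g 0 = Complex.exp (-c * r) * (f r - f 0 * Complex.exp (c * r)) := by
    have hcancel : Complex.exp (-c * r) * Complex.exp (c * r) = 1 := by
      rw [← Complex.exp_add, neg_mul, neg_add_cancel, Complex.exp_zero]
    simp only [g, Complex.ofReal_zero, mul_zero, Complex.exp_zero, one_mul]
    linear_combination f 0 * hcancel
  rwa [hfactor, norm_mul, hunit, one_mul, sub_zero, Real.norm_eq_abs] at hmean

lemma hasDerivAt_pow_succ_div_factorial (c : ℂ) (n : ℕ) (r : ℝ) :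
    HasDerivAt (fun r : ℝ => (c * r) ^ (n + 1) / (n + 1).factorial)
      (c * ((c * r) ^ n / n.factorial)) r := by
  convert! ((hasDerivAt_const_mul_ofReal c r).pow (n + 1)).div_const _ using 1
  rw [Nat.factorial_succ]
  push_cast
  field_simp

/-- The radial factor `a_n(r) = (ir/2)ⁿ / n! · j_{n+λ}(r)` of the expansion, whose `n`-th term is
`a_n(r) G_n(t)` with `G_n = gegenbauerScaled lam n`. -/
noncomputable def besselRadial (lam : ℝ) (n : ℕ) (r : ℝ) : ℂ :=
  (Complex.I / 2 * r) ^ n / n.factorial * besselJR (n + lam) r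

/-- The partial sum `∑_{n ≤ N} a_n(r) G_n(t)` of the expansion. -/
noncomputable def besselGegenbauerSum (lam t : ℝ) (N : ℕ) (r : ℝ) : ℂ :=
  ∑ n ∈ Finset.range (N + 1), besselRadial lam n r * gegenbauerScaled lam n t

/-- The Casoratian `a_N(r) G_{N+1}(t) - β_N a_{N+1}(r) G_N(t)`, which measures the failure of the
`N`-th partial sum to satisfy the differential equation `S' = i t S` of `r ↦ exp (i r t)`. -/
noncomputable def besselGegenbauerDefect (lam t : ℝ) (N : ℕ) (r : ℝ) : ℂ :=
  besselRadial lam N r * gegenbauerScaled lam (N + 1) t -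
    gegenbauerBeta lam N * besselRadial lam (N + 1) r * gegenbauerScaled lam N t

section Radial

variable {lam : ℝ} (hlam : -1 < lam)
include hlam

lemma besselGegenbauerSum_zero_right (t : ℝ) (N : ℕ) : besselGegenbauerSum lam t N 0 = 1 := by
  rw [besselGegenbauerSum, Finset.sum_range_succ']
  simp [besselRadial, gegenbauerScaled, gegenCoeff_zero, gegenbauerN_zero,
    besselJR_zero_right hlam]

lemma norm_besselRadial_le (n : ℕ) {r R : ℝ} (hr : |r| ≤ R) :
    ‖besselRadial lam n r‖ ≤
      (min (lam + 1) 1)⁻¹ * Real.exp ((R / 2) ^ 2) * ((R / 2) ^ n / n.factorial) := by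
  have : (0 : ℝ) ≤ n := n.cast_nonneg
  have hmin : 0 < min (lam + 1) 1 := lt_min (by linarith) one_pos
  have hbessel : |besselJR (n + lam) r| ≤ (min (lam + 1) 1)⁻¹ * Real.exp ((R / 2) ^ 2) := by
    refine (abs_besselJR_le (by linarith) r).trans ?_
    have hsq : (r / 2) ^ 2 ≤ (R / 2) ^ 2 := by
      rw [← sq_abs (r / 2), abs_div, abs_two]
      gcongr
    gcongr
    linarith
  have hpow : ‖(Complex.I / 2 * r) ^ n / n.factorial‖ ≤ (R / 2) ^ n / n.factorial := by
    simp only [norm_div, norm_pow, norm_mul, Complex.norm_I, Complex.norm_real, Real.norm_eq_abs,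
      RCLike.norm_ofNat, RCLike.norm_natCast, one_div_mul_eq_div]
    gcongr
  rw [besselRadial, norm_mul, Complex.norm_real, Real.norm_eq_abs, mul_comm]
  gcongr

lemma hasDerivAt_besselRadial_zero (r : ℝ) :
    HasDerivAt (besselRadial lam 0)
      (Complex.I / 2 * (gegenbauerBeta lam 0 * besselRadial lam 1 r)) r := by
  have hfun : besselRadial lam 0 = fun r => (besselJR lam r : ℂ) := by
    ext r
    simp [besselRadial]
  rw [hfun]
  convert! (hasDerivAt_besselJR hlam r).ofReal_comp using 1
  have hne : (lam + 1 : ℂ) ≠ 0 := by exact_mod_cast (by linarith : lam + 1 ≠ 0)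
  simp only [besselRadial, gegenbauerBeta, add_comm 1 lam, Nat.cast_zero,
    Nat.cast_one, zero_add, zero_div, sub_zero, pow_one, Nat.factorial_one, div_one]
  push_cast
  field_simp
  linear_combination r * besselJR (lam + 1) r * Complex.I_sq

lemma hasDerivAt_besselRadial_succ (n : ℕ) (r : ℝ) :
    HasDerivAt (besselRadial lam (n + 1))
      (Complex.I / 2 * (besselRadial lam n r +
        gegenbauerBeta lam (n + 1) * besselRadial lam (n + 2) r)) r := by
  have : (0 : ℝ) ≤ n := n.cast_nonneg
  have hne₁ : (n + lam + 1 : ℂ) ≠ 0 := by exact_mod_cast (by linarith : n + lam + 1 ≠ 0)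
  have hne₂ : (n + lam + 2 : ℂ) ≠ 0 := by exact_mod_cast (by linarith : n + lam + 2 ≠ 0)
  have hcontig : (besselJR (n + lam + 1) r : ℂ) = besselJR (n + lam) r +
      (r / 2) ^ 2 / ((n + lam + 1) * (n + lam + 2)) * besselJR (n + lam + 2) r := by
    have := besselJR_sub_besselJR_add_one (by linarith : -1 < n + lam) r
    exact_mod_cast (by linear_combination -this)
  have hbessel := (hasDerivAt_besselJR (by linarith : -1 < n + lam + 1) r).ofReal_comp
  rw [add_assoc (n + lam) 1 1, one_add_one_eq_two] at hbessel
  have hbeta : (gegenbauerBeta lam (n + 1) : ℂ) =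
      (n + 2) / (n + lam + 2) * (2 - (n + 1) / (n + lam + 1)) := by
    rw [gegenbauerBeta]
    push_cast
    ring_nf
  unfold besselRadial
  rw [show ((n + 1 : ℕ) : ℝ) + lam = n + lam + 1 by push_cast; ring,
    show ((n + 2 : ℕ) : ℝ) + lam = n + lam + 2 by push_cast; ring]
  convert! (hasDerivAt_pow_succ_div_factorial (Complex.I / 2) n r).mul hbessel using 1
  rw [hbeta, hcontig, Nat.factorial_succ, Nat.factorial_succ]
  simp only [pow_succ (Complex.I / 2 * r)]
  generalize (Complex.I / 2 * r) ^ n = w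
  have hne₃ : (n + 2 : ℂ) ≠ 0 := by exact_mod_cast (by linarith : (n + 2 : ℝ) ≠ 0)
  push_cast
  rw [add_assoc (n : ℂ) 1 1, one_add_one_eq_two]
  field_simp
  linear_combination w * r ^ 2 * (n + 2 * lam + 1) * besselJR (n + lam + 2) r / n.factorial *
    Complex.I_sq

end Radial

section Sum

variable {lam : ℝ} (hlam : -1 / 2 < lam)
include hlam

lemma hasDerivAt_besselGegenbauerSum (t : ℝ) (N : ℕ) (r : ℝ) :
    HasDerivAt (besselGegenbauerSum lam t N)
      (Complex.I * t * besselGegenbauerSum lam t N r -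
        Complex.I / 2 * besselGegenbauerDefect lam t N r) r := by
  have hlam' : -1 < lam := by linarith
  have hrec (n : ℕ) : (gegenbauerScaled lam (n + 2) t : ℂ) =
      2 * t * gegenbauerScaled lam (n + 1) t - gegenbauerBeta lam n * gegenbauerScaled lam n t :=
    mod_cast gegenbauerScaled_recurrence hlam n t
  induction N with
  | zero =>
    have hzero : gegenbauerScaled lam 0 t = 1 := by
      simp [gegenbauerScaled, gegenCoeff_zero, gegenbauerN_zero]
    have hone : gegenbauerScaled lam 1 t = 2 * t := by
      simp [gegenbauerScaled, gegenCoeff_one, gegenbauerN_one hlam]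
    have hsum : besselGegenbauerSum lam t 0 = besselRadial lam 0 := by
      ext r
      simp [besselGegenbauerSum, hzero]
    rw [hsum, besselGegenbauerDefect, hzero, hone]
    convert! hasDerivAt_besselRadial_zero hlam' r using 1
    push_cast
    ring
  | succ N ih =>
    have hsum (r : ℝ) : besselGegenbauerSum lam t (N + 1) r = besselGegenbauerSum lam t N r +
        besselRadial lam (N + 1) r * gegenbauerScaled lam (N + 1) t :=
      Finset.sum_range_succ _ _
    rw [funext hsum]
    convert! ih.add ((hasDerivAt_besselRadial_succ hlam' N r).mul_const _) using 1
    rw [besselGegenbauerDefect, besselGegenbauerDefect, hrec]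
    ring

lemma norm_besselRadial_mul_gegenbauerScaled_le (n : ℕ) {r t R T : ℝ} (hr : |r| ≤ R)
    (ht : |t| ≤ T) :
    ‖besselRadial lam n r * gegenbauerScaled lam n t‖ ≤
      (min (lam + 1) 1)⁻¹ * Real.exp ((R / 2) ^ 2) *
        ((R / 2 * (2 * T + 2)) ^ n / n.factorial) := by
  have hradial := norm_besselRadial_le (by linarith : -1 < lam) n hr
  have hscaled : |gegenbauerScaled lam n t| ≤ (2 * T + 2) ^ n :=
    (abs_gegenbauerScaled_le hlam n t).trans (by gcongr)
  rw [norm_mul, Complex.norm_real, Real.norm_eq_abs, mul_pow, mul_div_right_comm, ← mul_assoc]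
  exact mul_le_mul hradial hscaled (abs_nonneg _) ((norm_nonneg _).trans hradial)

lemma norm_besselGegenbauerDefect_le (t : ℝ) (N : ℕ) {r R : ℝ} (hr : |r| ≤ R) :
    ‖besselGegenbauerDefect lam t N r‖ ≤
      (min (lam + 1) 1)⁻¹ * Real.exp ((R / 2) ^ 2) *
        ((2 * |t| + 2) * ((R / 2 * (2 * |t| + 2)) ^ N / N.factorial) +
          4 * ((R / 2 * (2 * |t| + 2)) ^ (N + 1) / (N + 1).factorial)) := by
  set M := 2 * |t| + 2
  set A := (min (lam + 1) 1)⁻¹ * Real.exp ((R / 2) ^ 2)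
  have hM_ge : 1 ≤ M := by linarith [abs_nonneg t]
  have hradial (n : ℕ) : ‖besselRadial lam n r‖ ≤ A * ((R / 2) ^ n / n.factorial) :=
    norm_besselRadial_le (by linarith) n hr
  have hscaled (n : ℕ) : ‖(gegenbauerScaled lam n t : ℂ)‖ ≤ M ^ n := by
    simpa using abs_gegenbauerScaled_le hlam n t
  have hbeta : ‖(gegenbauerBeta lam N : ℂ)‖ ≤ 4 := by
    simpa using abs_gegenbauerBeta_le hlam N
  have hscaled_succ : ‖(gegenbauerScaled lam N t : ℂ)‖ ≤ M ^ (N + 1) :=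
    (hscaled N).trans (pow_le_pow_right₀ hM_ge N.le_succ)
  have hnonneg (n : ℕ) : 0 ≤ A * ((R / 2) ^ n / n.factorial) := (norm_nonneg _).trans (hradial n)
  calc ‖besselGegenbauerDefect lam t N r‖
      ≤ ‖besselRadial lam N r‖ * ‖(gegenbauerScaled lam (N + 1) t : ℂ)‖ +
          ‖(gegenbauerBeta lam N : ℂ)‖ * ‖besselRadial lam (N + 1) r‖ *
            ‖(gegenbauerScaled lam N t : ℂ)‖ := by
        simp only [← norm_mul]
        exact norm_sub_le _ _
    _ ≤ A * ((R / 2) ^ N / N.factorial) * M ^ (N + 1) +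
          4 * (A * ((R / 2) ^ (N + 1) / (N + 1).factorial)) * M ^ (N + 1) := by
        have := hnonneg N
        have := hnonneg (N + 1)
        gcongr
        · exact hradial N
        · exact hscaled (N + 1)
        · exact hradial (N + 1)
    _ = _ := by
        rw [mul_pow, mul_pow]
        ring

lemma tendsto_besselGegenbauerSum (r t : ℝ) :
    Tendsto (besselGegenbauerSum lam t · r) atTop (nhds (Complex.exp (Complex.I * r * t))) := by
  set x := |r| / 2 * (2 * |t| + 2)
  set A := (min (lam + 1) 1)⁻¹ * Real.exp ((|r| / 2) ^ 2)
  let ε (N : ℕ) : ℝ := A * ((2 * |t| + 2) * (x ^ N / N.factorial) +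
    4 * (x ^ (N + 1) / (N + 1).factorial))
  have hbound (N : ℕ) :
      ‖besselGegenbauerSum lam t N r - Complex.exp (Complex.I * r * t)‖ ≤ 1 / 2 * ε N * |r| := by
    have hode := norm_sub_mul_exp_le (c := Complex.I * t) (by simp)
      (hasDerivAt_besselGegenbauerSum hlam t N) (δ := 1 / 2 * ε N) (r := r) fun s hs => by
        rw [sub_sub_cancel_left, norm_neg, norm_mul, norm_div, Complex.norm_I,
          RCLike.norm_ofNat]
        gcongr
        exact norm_besselGegenbauerDefect_le hlam t N hs
    rwa [besselGegenbauerSum_zero_right (by linarith), one_mul, mul_right_comm] at hode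
  have hfactorial := FloorSemiring.tendsto_pow_div_factorial_atTop x
  have hε : Tendsto ε atTop (nhds 0) := by
    simpa using ((hfactorial.const_mul (2 * |t| + 2)).add
      ((hfactorial.comp (tendsto_add_atTop_nat 1)).const_mul 4)).const_mul A
  rw [tendsto_iff_norm_sub_tendsto_zero]
  exact squeeze_zero (fun N => norm_nonneg _) hbound
    (by simpa only [mul_zero, zero_mul] using (hε.const_mul (1 / 2)).mul_const |r|)

lemma hasSum_besselRadial_mul_gegenbauerScaled (r t : ℝ) :
    HasSum (fun n => besselRadial lam n r * gegenbauerScaled lam n t)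
      (Complex.exp (Complex.I * r * t)) := by
  have hsummable : Summable fun n => besselRadial lam n r * gegenbauerScaled lam n t :=
    .of_norm_bounded ((Real.summable_pow_div_factorial _).mul_left _)
      fun n => norm_besselRadial_mul_gegenbauerScaled_le hlam n le_rfl le_rfl
  rw [hsummable.hasSum_iff_tendsto_nat, ← tendsto_add_atTop_iff_nat 1]
  exact tendsto_besselGegenbauerSum hlam r t

lemma tendstoUniformlyOn_besselRadial_mul_gegenbauerScaled {K : Set (ℝ × ℝ)}
    (hK : Bornology.IsBounded K) :
    TendstoUniformlyOn
      (fun (m : ℕ) (p : ℝ × ℝ) =>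
        ∑ n ∈ Finset.range m, besselRadial lam n p.1 * gegenbauerScaled lam n p.2)
      (fun p => Complex.exp (Complex.I * p.1 * p.2)) atTop K := by
  obtain ⟨R, hR⟩ := hK.exists_norm_le
  refine (tendstoUniformlyOn_tsum_nat ((Real.summable_pow_div_factorial _).mul_left _)
    fun n p hp => norm_besselRadial_mul_gegenbauerScaled_le hlam n
      ((norm_fst_le p).trans (hR p hp)) ((norm_snd_le p).trans (hR p hp))).congr_right
    fun p _ => (hasSum_besselRadial_mul_gegenbauerScaled hlam p.1 p.2).tsum_eq

end Sum

theorem gegenbauer_degenerate_addition_general (lam : ℝ) (hlam : -1 / 2 < lam) :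
    (∀ (r t : ℝ),
      HasSum
        (fun n : ℕ =>
          (Complex.I * (r : ℂ) / 2) ^ n * ((gegenCoeff lam n / n.factorial : ℝ) : ℂ) *
            ((besselJR ((n : ℝ) + lam) r : ℝ) : ℂ) * ((gegenbauerN lam n t : ℝ) : ℂ))
        (Complex.exp (Complex.I * (r : ℂ) * (t : ℂ))))
    ∧ (∀ K : Set (ℝ × ℝ), IsCompact K →
      TendstoUniformlyOn
        (fun (m : ℕ) (p : ℝ × ℝ) =>
          ∑ n ∈ Finset.range m,
            (Complex.I * (p.1 : ℂ) / 2) ^ n * ((gegenCoeff lam n / n.factorial : ℝ) : ℂ) *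
              ((besselJR ((n : ℝ) + lam) p.1 : ℝ) : ℂ) *
              ((gegenbauerN lam n p.2 : ℝ) : ℂ))
        (fun p => Complex.exp (Complex.I * (p.1 : ℂ) * (p.2 : ℂ))) atTop K) := by
  have hterm (n : ℕ) (r t : ℝ) :
      (Complex.I * (r : ℂ) / 2) ^ n * ((gegenCoeff lam n / n.factorial : ℝ) : ℂ) *
          ((besselJR ((n : ℝ) + lam) r : ℝ) : ℂ) * ((gegenbauerN lam n t : ℝ) : ℂ) =
        besselRadial lam n r * gegenbauerScaled lam n t := by
    simp only [besselRadial, gegenbauerScaled]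
    push_cast
    ring
  simp only [hterm]
  exact ⟨hasSum_besselRadial_mul_gegenbauerScaled hlam,
    fun K hK => tendstoUniformlyOn_besselRadial_mul_gegenbauerScaled hlam hK.isBounded⟩

/-- Gegenbauer's degenerate addition theorem: for `λ ≥ 0`,
`e^{irt} = Σ_{n≥0} (ir/2)^n ((2λ)_n/((λ)_n n!)) j_{n+λ}(r) C̃_n^λ(t)` for all `r ∈ ℝ`,
`t ∈ [−1,1]`, with locally uniform convergence in `(r,t)`. -/
theorem gegenbauer_degenerate_addition (lam : ℝ) (hlam : 0 ≤ lam) :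
    (∀ (r t : ℝ), t ∈ Set.Icc (-1 : ℝ) 1 →
      HasSum
        (fun n : ℕ =>
          (Complex.I * (r : ℂ) / 2) ^ n * ((gegenCoeff lam n / n.factorial : ℝ) : ℂ) *
            ((besselJR ((n : ℝ) + lam) r : ℝ) : ℂ) * ((gegenbauerN lam n t : ℝ) : ℂ))
        (Complex.exp (Complex.I * (r : ℂ) * (t : ℂ))))
    ∧ (∀ K : Set (ℝ × ℝ), IsCompact K → K ⊆ Set.univ ×ˢ Set.Icc (-1 : ℝ) 1 →
      TendstoUniformlyOn
        (fun (m : ℕ) (p : ℝ × ℝ) =>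
          ∑ n ∈ Finset.range m,
            (Complex.I * (p.1 : ℂ) / 2) ^ n * ((gegenCoeff lam n / n.factorial : ℝ) : ℂ) *
              ((besselJR ((n : ℝ) + lam) p.1 : ℝ) : ℂ) *
              ((gegenbauerN lam n p.2 : ℝ) : ℂ))
        (fun p => Complex.exp (Complex.I * (p.1 : ℂ) * (p.2 : ℂ))) atTop K) := by
  have h := gegenbauer_degenerate_addition_general lam (by linarith)
  exact ⟨fun r t _ => h.1 r t, fun K hK _ => h.2 K hK⟩
end
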